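/- For every integer n ≤ −1 and every natural number l with (l : ℤ) > −n, one has K n l = 0. -/

import Mathlib

/-- The Bernoulli–Euler (zigzag, up-down) numbers: `A 0 = 1`, `A 1 = 1`, and
`2 * A (n+1) = ∑ k in range (n+1), (n.choose k) * A k * A (n-k)`. -/
def A : ℕ → ℕ
  | 0 => 1
  | 1 => 1
  | n + 2 =>
      (∑ k ∈ (Finset.range (n + 2)).attach,
        Nat.choose (n + 1) k.1 * A k.1 * A (n + 1 - k.1)) / 2
decreasing_by
  · have := Finset.mem_range.mp k.2; omega
  · have := Finset.mem_range.mp k.2; omega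

/-- `K n l` : number of connected components of the space of very nice
M-morsifications of the multiboundary singularity `B_n^l`, extended by the
recurrence `K n (l+1) = K (n+2) l − (n+2)·l·K (n+2) (l−1)` for `l ≥ 1`,
with `K n 0 = A (n-1)` for `n ≥ 1`, `K n 0 = 0` for `n ≤ 0`,
and `K n 1 = K (n+2) 0`. -/
def K : ℤ → ℕ → ℤ
  | n, 0 => if 1 ≤ n then (A (n - 1).toNat : ℤ) else 0
  | n, 1 => K (n + 2) 0
  | n, (l + 2) => K (n + 2) (l + 1) - (n + 2) * (l + 1) * K (n + 2) l

/-!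
The Meixner–Pollaczek polynomials satisfy
`P_{l+2}^{(c)} = X P_{l+1}^{(c+2)} - c (l+1) P_l^{(c+2)}`, which for `c = n + 2` is the recurrence
for `K n`. Hence, if a linear functional `L` has the even moments `L (X ^ (2j)) = K (n + 2 + 2j) 0`,
then `K n l = L (X ^ (l-2) * P_l^{(n+2)})` for `l ≥ 2`. By André's theorem the functional with
exponential generating function `sec` has this property for `n = -1`, and the one with `sec² = tan'`
for `n = 0`. As `P_l^{(c)}(d/dx) sec^c` is a multiple of `tan^l sec^c`, which vanishes to order `l`
at the origin, this functional kills `X ^ k * P_l^{(n+2)}` for `k < l`, so that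
`K (-1) l = K 0 l = 0` for `l ≥ 2`. The recurrence propagates this to all `n ≤ -1`; at `n = -2` the
term `K 0 l`, nonzero for `l = 1`, enters with coefficient `n + 2 = 0`.
-/

open Finset
open scoped Nat Polynomial PowerSeries

section PowerSeries

open PowerSeries

theorem factorial_mul_coeff_mul {R : Type*} [CommSemiring R] (f g : R⟦X⟧) (n : ℕ) :
    n ! * coeff n (f * g) = ∑ p ∈ antidiagonal n,
      n.choose p.1 * (p.1 ! * coeff p.1 f) * (p.2 ! * coeff p.2 g) := by
  rw [coeff_mul, mul_sum]
  refine sum_congr rfl fun ⟨i, j⟩ hij => ?_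
  obtain rfl : i + j = n := mem_antidiagonal.mp hij
  rw [← Nat.add_choose_mul_factorial_mul_factorial, ← Nat.choose_symm_add]
  push_cast
  ring

theorem factorial_mul_coeff_derivative {R : Type*} [CommSemiring R] (f : R⟦X⟧) (n : ℕ) :
    n ! * coeff n (derivative R f) = (n + 1)! * coeff (n + 1) f := by
  rw [coeff_derivative, Nat.factorial_succ]
  push_cast
  ring

theorem coeff_eq_zero_of_evalNegHom_eq_self {R : Type*} [CommRing R] [IsAddTorsionFree R]
    {f : R⟦X⟧} (hf : evalNegHom f = f) {n : ℕ} (hn : Odd n) : coeff n f = 0 := by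
  have := congrArg (coeff n) hf
  rw [evalNegHom, coeff_rescale, hn.neg_one_pow, neg_one_mul] at this
  exact neg_eq_self.mp this

theorem coeff_eq_zero_of_evalNegHom_eq_neg {R : Type*} [CommRing R] [IsAddTorsionFree R]
    {f : R⟦X⟧} (hf : evalNegHom f = -f) {n : ℕ} (hn : Even n) : coeff n f = 0 := by
  have := congrArg (coeff n) hf
  rw [evalNegHom, coeff_rescale, hn.neg_one_pow, map_neg, one_mul] at this
  exact self_eq_neg.mp this

end PowerSeries

section MeixnerPollaczek

open Polynomial

variable {R : Type*} [CommRing R]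

/-- The Meixner–Pollaczek polynomials at angle `π / 2`, rescaled to be monic: in the classical
notation `meixnerPollaczek c l` is `l! * P_l^{(c/2)}(X/2; π/2)`. Their exponential generating
function in `l` is `(1 + t²) ^ (-c/2) * exp (X * arctan t)`. -/
noncomputable def meixnerPollaczek (c : R) : ℕ → R[X]
  | 0 => 1
  | 1 => X
  | l + 2 => X * meixnerPollaczek c (l + 1) - ((l + 1) * (l + c)) • meixnerPollaczek c l

theorem meixnerPollaczek_add_two (c : R) (l : ℕ) :
    meixnerPollaczek c (l + 2) =
      X * meixnerPollaczek c (l + 1) - ((l + 1) * (l + c)) • meixnerPollaczek c l := by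
  rw [meixnerPollaczek]

-- Raising `c` by `2` divides the generating function by `1 + t²`.
theorem meixnerPollaczek_eq_add_smul (c : R) : ∀ l : ℕ,
    meixnerPollaczek c (l + 2) =
      meixnerPollaczek (c + 2) (l + 2) +
        ((l + 2) * (l + 1) : R) • meixnerPollaczek (c + 2) l
  | 0 => by
    simp only [meixnerPollaczek, smul_eq_C_mul, map_mul, map_add, map_one, map_ofNat, map_natCast]
    push_cast
    ring
  | 1 => by
    simp only [meixnerPollaczek, smul_eq_C_mul, map_mul, map_add, map_one, map_ofNat, map_natCast]
    push_cast
    ring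
  | l + 2 => by
    have rec_low := meixnerPollaczek_add_two c (l + 2)
    have rec_high := meixnerPollaczek_add_two (c + 2) (l + 2)
    have rec_high' := meixnerPollaczek_add_two (c + 2) l
    have ih := meixnerPollaczek_eq_add_smul c l
    have ih' := meixnerPollaczek_eq_add_smul c (l + 1)
    simp only [smul_eq_C_mul, map_mul, map_add, map_one, map_ofNat, map_natCast, Nat.cast_add,
      Nat.cast_ofNat, Nat.cast_one] at *
    linear_combination rec_low - rec_high + X * ih' - (l + 3) * (l + 2 + C c) * ih
      - ((l : R[X]) + 3) * (l + 2) * rec_high'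

theorem meixnerPollaczek_add_two_eq_X_mul_sub (c : R) (l : ℕ) :
    meixnerPollaczek c (l + 2) =
      X * meixnerPollaczek (c + 2) (l + 1) - (c * (l + 1)) • meixnerPollaczek (c + 2) l := by
  rw [meixnerPollaczek_eq_add_smul, meixnerPollaczek_add_two, sub_add, ← sub_smul]
  congr 2
  ring

section Derivation

variable {B : Type*} [CommRing B] [Algebra R B] (D : Derivation R B B) {c : R} {T S : B}

theorem derivation_pow_succ_mul (hT : D T = 1 + T ^ 2) (hS : D S = c • (T * S)) (l : ℕ) :
    D (T ^ (l + 1) * S) =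
      (l + 1 + c) • (T ^ (l + 2) * S) + (l + 1 : R) • (T ^ l * S) := by
  simp only [Derivation.leibniz, Derivation.leibniz_pow, hT, hS, smul_eq_mul, nsmul_eq_mul,
    Algebra.smul_def (R := R), map_add, map_natCast, map_one, Nat.add_sub_cancel, Nat.cast_add,
    Nat.cast_one]
  ring

-- The model case is `D = d/dx`, `T = tan`, `S = sec ^ c`.
theorem aeval_meixnerPollaczek_apply (hT : D T = 1 + T ^ 2) (hS : D S = c • (T * S)) :
    ∀ l : ℕ, aeval D.toLinearMap (meixnerPollaczek c l) S =
      (ascPochhammer R l).eval c • (T ^ l * S)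
  | 0 => by simp [meixnerPollaczek]
  | 1 => by simp [meixnerPollaczek, hS]
  | l + 2 => by
    have ih := aeval_meixnerPollaczek_apply hT hS l
    have ih' := aeval_meixnerPollaczek_apply hT hS (l + 1)
    rw [meixnerPollaczek_add_two, map_sub, map_mul, map_smul, aeval_X, LinearMap.sub_apply,
      LinearMap.smul_apply, Module.End.mul_apply, ih, ih', map_smul, Derivation.coeFn_coe,
      derivation_pow_succ_mul D hT hS]
    simp only [ascPochhammer_succ_eval, Nat.cast_add, Nat.cast_one]
    module

end Derivation

end MeixnerPollaczek

section MomentFunctional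

variable {R : Type*} [CommRing R]

/-- The linear functional on polynomials whose moments are those of the exponential generating
function `f`: it sends `X ^ k` to `k! * coeff k f`. It is encoded as the constant term of
`p(d/dX) f`, so that multiplication by `X` becomes differentiation of `f`. -/
noncomputable def momentFunctional (f : R⟦X⟧) : R[X] →ₗ[R] R :=
  PowerSeries.coeff 0 ∘ₗ LinearMap.applyₗ f ∘ₗ
    (Polynomial.aeval (PowerSeries.derivative R).toLinearMap).toLinearMap

theorem momentFunctional_X_pow_mul (f : R⟦X⟧) (k : ℕ) (p : R[X]) :
    momentFunctional f (Polynomial.X ^ k * p) =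
      k ! * PowerSeries.coeff k (Polynomial.aeval (PowerSeries.derivative R).toLinearMap p f) := by
  rw [← PowerSeries.constantCoeff_iterate_derivative]
  simp [momentFunctional, Module.End.pow_apply]

theorem momentFunctional_X_pow (f : R⟦X⟧) (k : ℕ) :
    momentFunctional f (Polynomial.X ^ k) = k ! * PowerSeries.coeff k f := by
  simpa using momentFunctional_X_pow_mul f k 1

-- For `T = tan` and `S = sec ^ c` this is the orthogonality of the Meixner–Pollaczek polynomials.
theorem momentFunctional_X_pow_mul_meixnerPollaczek {c : R} {T S : R⟦X⟧}
    (hT : PowerSeries.derivative R T = 1 + T ^ 2) (hT₀ : PowerSeries.constantCoeff T = 0)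
    (hS : PowerSeries.derivative R S = c • (T * S)) {k l : ℕ} (hkl : k < l) :
    momentFunctional S (Polynomial.X ^ k * meixnerPollaczek c l) = 0 := by
  have X_pow_dvd : (PowerSeries.X : R⟦X⟧) ^ l ∣ T ^ l * S :=
    (pow_dvd_pow_of_dvd (PowerSeries.X_dvd_iff.mpr hT₀) l).mul_right S
  rw [momentFunctional_X_pow_mul, aeval_meixnerPollaczek_apply _ hT hS, map_smul,
    PowerSeries.X_pow_dvd_iff.mp X_pow_dvd k hkl, smul_zero, mul_zero]

end MomentFunctional

section SecTan

open PowerSeries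

section SinCos

variable (R : Type*) [CommRing R] [Algebra ℚ R]

theorem derivative_sin : derivative R (sin R) = cos R := by
  ext n
  rw [coeff_derivative, sin, cos, coeff_mk, coeff_mk]
  obtain ⟨m, rfl | rfl⟩ := Nat.even_or_odd' n
  · have half : (2 * m + 1) / 2 = m := by omega
    rw [if_neg (by simp), if_pos (by simp), half, Nat.mul_div_cancel_left m two_pos,
      ← map_natCast (algebraMap ℚ R), ← map_one (algebraMap ℚ R), ← map_add, ← map_mul]
    congr 1
    rw [Nat.factorial_succ]
    push_cast
    field_simp
  · rw [if_pos (by simp [parity_simps]), if_neg (by simp), zero_mul]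

theorem derivative_cos : derivative R (cos R) = -sin R := by
  ext n
  rw [coeff_derivative, map_neg, sin, cos, coeff_mk, coeff_mk]
  obtain ⟨m, rfl | rfl⟩ := Nat.even_or_odd' n
  · rw [if_neg (by simp), if_pos (by simp), zero_mul, neg_zero]
  · have half : (2 * m + 1) / 2 = m := by omega
    have half_succ : (2 * m + 1 + 1) / 2 = m + 1 := by omega
    rw [if_pos (by simp [parity_simps]), if_neg (by simp), half, half_succ,
      ← map_natCast (algebraMap ℚ R), ← map_one (algebraMap ℚ R), ← map_add, ← map_mul,
      ← map_neg]
    congr 1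
    rw [Nat.factorial_succ (2 * m + 1)]
    push_cast
    field_simp
    ring

theorem constantCoeff_sin : constantCoeff (sin R) = 0 := by
  simp [sin]

theorem constantCoeff_cos : constantCoeff (cos R) = 1 := by
  simp [cos]

theorem sin_sq_add_cos_sq : sin R ^ 2 + cos R ^ 2 = 1 := by
  have : IsAddTorsionFree R := .of_module_rat R
  refine derivative.ext ?_ (by simp [constantCoeff_sin, constantCoeff_cos])
  simp only [map_add, derivative_pow, derivative_sin, derivative_cos, derivative_one]
  ring

theorem evalNegHom_sin : evalNegHom (sin R) = -sin R := by
  ext n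
  rcases Nat.even_or_odd n with h | h
  · simp [evalNegHom, sin, h]
  · simp [evalNegHom, sin, h.neg_one_pow, Nat.not_even_iff_odd.mpr h]

theorem evalNegHom_cos : evalNegHom (cos R) = cos R := by
  ext n
  rcases Nat.even_or_odd n with h | h
  · simp [evalNegHom, cos, h.neg_one_pow]
  · simp [evalNegHom, cos, Nat.not_even_iff_odd.mpr h]

end SinCos

variable (F : Type*) [Field F] [CharZero F]

/-- The formal power series of the secant, the exponential generating function of the zigzag
numbers of even index; encoded as the inverse of the series of the cosine. -/
noncomputable def secSeries : F⟦X⟧ := (cos F)⁻¹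

/-- The formal power series of the tangent, the exponential generating function of the zigzag
numbers of odd index; encoded as sine times secant. -/
noncomputable def tanSeries : F⟦X⟧ := sin F * secSeries F

theorem cos_mul_secSeries : cos F * secSeries F = 1 :=
  PowerSeries.mul_inv_cancel _ (by simp [constantCoeff_cos])

theorem constantCoeff_secSeries : constantCoeff (secSeries F) = 1 := by
  simp [secSeries, constantCoeff_cos]

theorem constantCoeff_tanSeries : constantCoeff (tanSeries F) = 0 := by
  simp [tanSeries, constantCoeff_sin]

theorem secSeries_sq : secSeries F ^ 2 = 1 + tanSeries F ^ 2 := by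
  rw [tanSeries]
  linear_combination (1 + cos F * secSeries F) * cos_mul_secSeries F -
    secSeries F ^ 2 * sin_sq_add_cos_sq F

theorem derivative_secSeries : derivative F (secSeries F) = tanSeries F * secSeries F := by
  rw [tanSeries, secSeries, derivative_inv', derivative_cos]
  ring

theorem derivative_tanSeries : derivative F (tanSeries F) = 1 + tanSeries F ^ 2 := by
  rw [tanSeries, Derivation.leibniz, derivative_secSeries, derivative_sin, smul_eq_mul,
    smul_eq_mul, tanSeries]
  linear_combination cos_mul_secSeries F

theorem evalNegHom_secSeries : evalNegHom (secSeries F) = secSeries F := by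
  have := congrArg evalNegHom (cos_mul_secSeries F)
  rw [map_mul, evalNegHom_cos, map_one] at this
  linear_combination secSeries F * this - evalNegHom (secSeries F) * cos_mul_secSeries F

theorem evalNegHom_tanSeries : evalNegHom (tanSeries F) = -tanSeries F := by
  rw [tanSeries, map_mul, evalNegHom_sin, evalNegHom_secSeries, neg_mul]

end SecTan

section Zigzag

open PowerSeries

-- The involution `(i, j) ↦ (j, i)` pairs equal terms, and a fixed point carries an even central
-- binomial coefficient.
theorem two_dvd_sum_antidiagonal_choose_mul (f : ℕ → ℕ) {n : ℕ} (hn : n ≠ 0) :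
    2 ∣ ∑ p ∈ antidiagonal n, n.choose p.1 * f p.1 * f p.2 := by
  rw [← ZMod.natCast_eq_zero_iff]
  push_cast
  refine sum_involution (fun p _ => p.swap) ?_ ?_ (fun p hp => by simpa [add_comm] using hp)
    (fun p _ => p.swap_swap)
  · rintro ⟨i, j⟩ hij
    rw [Prod.swap, Nat.choose_symm_of_eq_add (mem_antidiagonal.mp hij).symm, mul_right_comm]
    exact CharTwo.add_self_eq_zero _
  · rintro ⟨i, j⟩ hij hne heq
    obtain rfl : j = i := congrArg Prod.fst heq
    obtain rfl : n = 2 * j := by rw [← mem_antidiagonal.mp hij, two_mul]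
    have : ((2 * j).choose j : ZMod 2) = 0 := by
      rw [ZMod.natCast_eq_zero_iff]
      exact Nat.two_dvd_centralBinom_of_one_le (by omega)
    simp [this] at hne

theorem two_mul_A_add_two (n : ℕ) :
    2 * A (n + 2) = ∑ p ∈ antidiagonal (n + 1), (n + 1).choose p.1 * A p.1 * A p.2 := by
  rw [A, sum_attach (range (n + 2)) fun k => (n + 1).choose k * A k * A (n + 1 - k),
    ← Nat.sum_antidiagonal_eq_sum_range_succ fun i j => (n + 1).choose i * A i * A j]
  exact Nat.mul_div_cancel' (two_dvd_sum_antidiagonal_choose_mul A n.succ_ne_zero)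

theorem factorial_mul_coeff_eq_A {R : Type*} [CommRing R] [NoZeroDivisors R] [NeZero (2 : R)]
    {f : R⟦X⟧} (hf : 2 * derivative R f = 1 + f ^ 2) (hf₀ : constantCoeff f = 1) (n : ℕ) :
    n ! * coeff n f = A n := by
  have ode (n : ℕ) : 2 * ((n + 1)! * coeff (n + 1) f) = n ! * coeff n (1 + f ^ 2) := by
    rw [← hf, ← factorial_mul_coeff_derivative, ← map_ofNat (C (R := R)) 2, coeff_C_mul,
      mul_left_comm]
  induction n using Nat.strong_induction_on with
  | _ n ih =>
    match n with
    | 0 => simp [hf₀, A]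
    | 1 =>
      refine mul_left_cancel₀ (two_ne_zero' R) ((ode 0).trans ?_)
      simp [hf₀, A, one_add_one_eq_two]
    | n + 2 =>
      refine mul_left_cancel₀ (two_ne_zero' R) ((ode (n + 1)).trans ?_)
      rw [map_add, coeff_one, if_neg n.succ_ne_zero, zero_add, pow_two, factorial_mul_coeff_mul]
      have := congrArg (Nat.cast (R := R)) (two_mul_A_add_two n)
      push_cast at this
      rw [this]
      refine sum_congr rfl fun ⟨i, j⟩ hij => ?_
      have hij : i + j = n + 1 := mem_antidiagonal.mp hij
      rw [ih i (by omega), ih j (by omega)]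

variable (F : Type*) [Field F] [CharZero F]

-- André's theorem on alternating permutations.
theorem factorial_mul_coeff_secSeries_add_tanSeries (n : ℕ) :
    n ! * coeff n (secSeries F + tanSeries F) = A n := by
  refine factorial_mul_coeff_eq_A ?_ ?_ n
  · rw [map_add, derivative_secSeries, derivative_tanSeries]
    linear_combination -secSeries_sq F
  · rw [map_add, constantCoeff_secSeries, constantCoeff_tanSeries, add_zero]

theorem factorial_mul_coeff_secSeries_of_even {n : ℕ} (hn : Even n) :
    n ! * coeff n (secSeries F) = A n := by
  rw [← factorial_mul_coeff_secSeries_add_tanSeries, map_add,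
    coeff_eq_zero_of_evalNegHom_eq_neg (evalNegHom_tanSeries F) hn, add_zero]

theorem factorial_mul_coeff_tanSeries_of_odd {n : ℕ} (hn : Odd n) :
    n ! * coeff n (tanSeries F) = A n := by
  rw [← factorial_mul_coeff_secSeries_add_tanSeries, map_add,
    coeff_eq_zero_of_evalNegHom_eq_self (evalNegHom_secSeries F) hn, zero_add]

end Zigzag

section Vanishing

open Polynomial

theorem K_natCast_add_one_zero (m : ℕ) : K (m + 1) 0 = A m := by
  rw [K, if_pos (by omega), add_sub_cancel_right, Int.toNat_natCast]

theorem K_add_two (n : ℤ) (l : ℕ) :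
    K n (l + 2) = K (n + 2) (l + 1) - (n + 2) * (l + 1) * K (n + 2) l := by
  rw [K]

variable {R : Type*} [CommRing R]

theorem K_add_two_eq_apply_of_eq_apply (L : R[X] →ₗ[R] R) {n : ℤ} {k l : ℕ}
    (h_succ : (K (n + 2) (l + 1) : R) = L (X ^ (k + 1) * meixnerPollaczek (n + 2 + 2 : R) (l + 1)))
    (h : (K (n + 2) l : R) = L (X ^ k * meixnerPollaczek (n + 2 + 2 : R) l)) :
    (K n (l + 2) : R) = L (X ^ k * meixnerPollaczek (n + 2 : R) (l + 2)) := by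
  rw [meixnerPollaczek_add_two_eq_X_mul_sub, mul_sub, mul_smul_comm, map_sub, map_smul,
    ← mul_assoc, ← pow_succ, ← h_succ, ← h, K_add_two]
  push_cast
  rfl

theorem K_eq_apply_X_pow_mul_meixnerPollaczek (L : R[X] →ₗ[R] R) : ∀ (l k : ℕ) (n : ℤ),
    (∀ j : ℕ, L (X ^ (k + 2 * j)) = K (n + 2 * j) 0) →
      (K n l : R) = L (X ^ (k + l) * meixnerPollaczek (n + 2 : R) l)
  | 0, k, n, hL => by simpa [meixnerPollaczek] using (hL 0).symm
  | 1, k, n, hL => by simpa [meixnerPollaczek, K, pow_succ, mul_assoc] using (hL 1).symm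
  | l + 2, k, n, hL => by
    have hL' (j : ℕ) : L (X ^ (k + 2 + 2 * j)) = K (n + 2 + 2 * j) 0 := by
      convert hL (j + 1) using 3 <;> push_cast <;> ring
    have h_succ := K_eq_apply_X_pow_mul_meixnerPollaczek L (l + 1) (k + 2) (n + 2) hL'
    have h := K_eq_apply_X_pow_mul_meixnerPollaczek L l (k + 2) (n + 2) hL'
    rw [show k + (l + 2) = k + 2 + l by ring]
    push_cast at h_succ h
    exact K_add_two_eq_apply_of_eq_apply L h_succ h

theorem K_add_two_eq_zero_of_moments [CharZero R] {n : ℤ} {T S : R⟦X⟧}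
    (hT : PowerSeries.derivative R T = 1 + T ^ 2) (hT₀ : PowerSeries.constantCoeff T = 0)
    (hS : PowerSeries.derivative R S = (n + 2 : R) • (T * S))
    (moments : ∀ j : ℕ, (2 * j)! * PowerSeries.coeff (2 * j) S = (K (n + 2 + 2 * j) 0 : R))
    (l : ℕ) : K n (l + 2) = 0 := by
  have hL (j : ℕ) : momentFunctional S (X ^ (0 + 2 * j)) = K (n + 2 + 2 * j) 0 := by
    rw [zero_add, momentFunctional_X_pow, moments]
  have h_succ := K_eq_apply_X_pow_mul_meixnerPollaczek _ (l + 1) 0 (n + 2) hL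
  have h := K_eq_apply_X_pow_mul_meixnerPollaczek _ l 0 (n + 2) hL
  push_cast [zero_add] at h_succ h
  have orthogonality := momentFunctional_X_pow_mul_meixnerPollaczek hT hT₀ hS
    (show l < l + 2 by omega)
  exact_mod_cast (K_add_two_eq_apply_of_eq_apply _ h_succ h).trans orthogonality

theorem K_neg_one_add_two (l : ℕ) : K (-1) (l + 2) = 0 := by
  refine K_add_two_eq_zero_of_moments (derivative_tanSeries ℚ) (constantCoeff_tanSeries ℚ)
    (S := secSeries ℚ) ?_ (fun j => ?_) l
  · rw [derivative_secSeries]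
    norm_num
  · have index : (-1 + 2 + 2 * j : ℤ) = (2 * j : ℕ) + 1 := by push_cast; ring
    rw [factorial_mul_coeff_secSeries_of_even ℚ (even_two_mul j), index, K_natCast_add_one_zero,
      Int.cast_natCast]

theorem K_zero_add_two (l : ℕ) : K 0 (l + 2) = 0 := by
  refine K_add_two_eq_zero_of_moments (derivative_tanSeries ℚ) (constantCoeff_tanSeries ℚ)
    (S := secSeries ℚ ^ 2) ?_ (fun j => ?_) l
  · rw [PowerSeries.derivative_pow, derivative_secSeries, Int.cast_zero, zero_add, two_smul]
    push_cast
    ring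
  · have index : (0 + 2 + 2 * j : ℤ) = (2 * j + 1 : ℕ) + 1 := by push_cast; ring
    rw [secSeries_sq, ← derivative_tanSeries, factorial_mul_coeff_derivative,
      factorial_mul_coeff_tanSeries_of_odd ℚ (odd_two_mul_add_one j), index,
      K_natCast_add_one_zero, Int.cast_natCast]

end Vanishing

/-- For `n ≤ −1` and `l > −n`, `K n l = 0`. -/
theorem K_eq_zero_of_lt (n : ℤ) (hn : n ≤ -1) (l : ℕ) (hl : (l : ℤ) > -n) :
    K n l = 0 := by
  induction l using Nat.strong_induction_on generalizing n with
  | _ l ih =>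
    obtain ⟨l, rfl⟩ : ∃ m, l = m + 2 := ⟨l - 2, by omega⟩
    obtain rfl | rfl | h : n = -1 ∨ n = -2 ∨ n + 2 ≤ -1 := by omega
    · exact K_neg_one_add_two l
    · obtain ⟨l, rfl⟩ : ∃ m, l = m + 1 := ⟨l - 1, by omega⟩
      rw [K_add_two, neg_add_cancel, K_zero_add_two, zero_mul, zero_mul, sub_zero]
    · have h_succ : K (n + 2) (l + 1) = 0 := ih (l + 1) (by omega) (n + 2) h (by omega)
      have h_self : K (n + 2) l = 0 := ih l (by omega) (n + 2) h (by omega)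
      rw [K_add_two, h_succ, h_self, mul_zero, sub_zero]
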